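/- arXiv:2307.05704 — 3 statements merged into one kernel-verified Lean document; each statement's English description precedes it below -/
import Mathlib

section
/- Let A be an invertible n×n real matrix and let Σ₁, Σ₂, Σ̃₁, Σ̃₂ be diagonal positive-definite n×n real matrices satisfying A Σ₁ Aᵀ = Σ̃₁ and A Σ₂ Aᵀ = Σ̃₂. If the diagonal entries of Σ₂ Σ₁⁻¹ are pairwise distinct, then there exists a permutation σ of {1,…,n} such that A_{ij} = 0 whenever j ≠ σ(i). -/
open Matrix

/-- If an invertible matrix `A` maps two diagonal positive-definite covariances `S₁, S₂`
onto diagonal positive-definite covariances `T₁, T₂` (via `A Sᵢ Aᵀ = Tᵢ`), and the diagonal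
entries of `S₂ S₁⁻¹` are pairwise distinct, then `A` is supported on the graph of a
permutation. -/
theorem affine_cov_transport_perm
    (n : ℕ) (hn : 1 ≤ n) (A S₁ S₂ T₁ T₂ : Matrix (Fin n) (Fin n) ℝ)
    (hA : IsUnit A)
    (hS₁d : S₁.IsDiag) (hS₁pos : ∀ i, 0 < S₁ i i)
    (hS₂d : S₂.IsDiag) (hS₂pos : ∀ i, 0 < S₂ i i)
    (hT₁d : T₁.IsDiag) (hT₁pos : ∀ i, 0 < T₁ i i)
    (hT₂d : T₂.IsDiag) (hT₂pos : ∀ i, 0 < T₂ i i)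
    (h₁ : A * S₁ * Aᵀ = T₁) (h₂ : A * S₂ * Aᵀ = T₂)
    (hdist : ∀ i j : Fin n, i ≠ j → (S₂ * S₁⁻¹) i i ≠ (S₂ * S₁⁻¹) j j) :
    ∃ σ : Equiv.Perm (Fin n), ∀ i j : Fin n, j ≠ σ i → A i j = 0 := by
  obtain ⟨s₁, rfl⟩ : ∃ d, S₁ = diagonal d := ⟨_, hS₁d.diagonal_diag.symm⟩
  obtain ⟨s₂, rfl⟩ : ∃ d, S₂ = diagonal d := ⟨_, hS₂d.diagonal_diag.symm⟩
  obtain ⟨t₁, rfl⟩ : ∃ d, T₁ = diagonal d := ⟨_, hT₁d.diagonal_diag.symm⟩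
  obtain ⟨t₂, rfl⟩ : ∃ d, T₂ = diagonal d := ⟨_, hT₂d.diagonal_diag.symm⟩
  simp only [diagonal_apply_eq] at hS₁pos hS₂pos hT₁pos hT₂pos
  have hinv : (diagonal s₁)⁻¹ = diagonal (fun i => (s₁ i)⁻¹) := by
    apply Matrix.inv_eq_right_inv
    rw [diagonal_mul_diagonal, ← diagonal_one]
    congr 1
    funext i
    exact mul_inv_cancel₀ (hS₁pos i).ne'
  have hd : ∀ i j : Fin n, i ≠ j → s₂ i / s₁ i ≠ s₂ j / s₁ j := by
    intro i j hij
    have := hdist i j hij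
    rw [hinv, diagonal_mul_diagonal, diagonal_apply_eq, diagonal_apply_eq] at this
    simpa [div_eq_mul_inv] using this
  have hB : IsUnit Aᵀ := (Matrix.isUnit_transpose A).2 hA
  have key : diagonal (fun i => t₂ i / t₁ i) * (A * diagonal s₁) = A * diagonal s₂ := by
    apply hB.mul_right_cancel
    rw [Matrix.mul_assoc, h₁, h₂, diagonal_mul_diagonal]
    congr 1
    funext i
    exact div_mul_cancel₀ _ (hT₁pos i).ne'
  have ent : ∀ i j, A i j ≠ 0 → s₂ j / s₁ j = t₂ i / t₁ i := by
    intro i j h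
    have := congrFun (congrFun key i) j
    rw [diagonal_mul, mul_diagonal, mul_diagonal] at this
    rw [div_eq_iff (hS₁pos j).ne']
    apply mul_left_cancel₀ h
    linarith
  have uniq : ∀ i j k, A i j ≠ 0 → A i k ≠ 0 → j = k := by
    intro i j k hj hk
    by_contra hne
    exact hd j k hne ((ent i j hj).trans (ent i k hk).symm)
  have sum₁ : ∀ i k, ∑ j, A i j * s₁ j * A k j = diagonal t₁ i k := by
    intro i k
    rw [← h₁, Matrix.mul_apply]
    simp [mul_diagonal]
  have ex : ∀ i, ∃ j, A i j ≠ 0 := by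
    intro i
    by_contra! h
    have := sum₁ i i
    simp [h] at this
    exact (hT₁pos i).ne this
  choose f hf using ex
  have finj : Function.Injective f := by
    intro i k hik
    by_contra hne
    have := sum₁ i k
    rw [diagonal_apply_ne _ hne, Finset.sum_eq_single (f i)] at this
    · have h3 := hf k
      rw [← hik] at h3
      exact mul_ne_zero (mul_ne_zero (hf i) (hS₁pos _).ne') h3 this
    · intro j _ hj
      have : A i j = 0 := by
        by_contra h
        exact hj (uniq i j (f i) h (hf i))
      simp [this]
    · simp
  refine ⟨Equiv.ofBijective f (Finite.injective_iff_bijective.1 finj), ?_⟩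
  intro i j hj
  by_contra h
  exact hj (uniq i j (f i) h (hf i))
end

section
/- Let A be an invertible n×n real matrix and let Σ₁, Σ₂, Σ̃₁, Σ̃₂ be diagonal positive-definite n×n real matrices satisfying A Σ₁ Aᵀ = Σ̃₁ and A Σ₂ Aᵀ = Σ̃₂. If Σ̃₂ Σ̃₁⁻¹ = Σ₂ Σ₁⁻¹ and the diagonal entries of Σ₂ Σ₁⁻¹ are pairwise distinct, then A is diagonal. -/
open Matrix

/-- If an invertible matrix `A` maps two diagonal positive-definite covariances `S₁, S₂`
onto diagonal positive-definite covariances `T₁, T₂` (via `A Sᵢ Aᵀ = Tᵢ`), the covariance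
ratios agree (`T₂ T₁⁻¹ = S₂ S₁⁻¹`), and the diagonal entries of `S₂ S₁⁻¹` are pairwise
distinct, then `A` is diagonal. -/
theorem affine_cov_transport_diag
    (n : ℕ) (hn : 1 ≤ n) (A S₁ S₂ T₁ T₂ : Matrix (Fin n) (Fin n) ℝ)
    (hA : IsUnit A)
    (hS₁d : S₁.IsDiag) (hS₁pos : ∀ i, 0 < S₁ i i)
    (hS₂d : S₂.IsDiag) (hS₂pos : ∀ i, 0 < S₂ i i)
    (hT₁d : T₁.IsDiag) (hT₁pos : ∀ i, 0 < T₁ i i)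
    (hT₂d : T₂.IsDiag) (hT₂pos : ∀ i, 0 < T₂ i i)
    (h₁ : A * S₁ * Aᵀ = T₁) (h₂ : A * S₂ * Aᵀ = T₂)
    (hratio : T₂ * T₁⁻¹ = S₂ * S₁⁻¹)
    (hdist : ∀ i j : Fin n, i ≠ j → (S₂ * S₁⁻¹) i i ≠ (S₂ * S₁⁻¹) j j) :
    A.IsDiag := by
  have unit_of : ∀ S : Matrix (Fin n) (Fin n) ℝ, S.IsDiag → (∀ i, 0 < S i i) → IsUnit S.det := by
    intro S hd hp
    rw [← hd.diagonal_diag, Matrix.det_diagonal]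
    exact isUnit_iff_ne_zero.mpr (Finset.prod_ne_zero_iff.mpr fun i _ => (hp i).ne')
  have u1 := unit_of S₁ hS₁d hS₁pos
  have v1 := unit_of T₁ hT₁d hT₁pos
  generalize hD : S₂ * S₁⁻¹ = D at *
  have hS : D * S₁ = S₂ := by rw [← hD, Matrix.nonsing_inv_mul_cancel_right _ _ u1]
  have hT : D * T₁ = T₂ := by rw [← hratio, Matrix.nonsing_inv_mul_cancel_right _ _ v1]
  have hDd : D.IsDiag := by
    intro i j hij
    have h := congrFun (congrFun hS i) j
    rw [← hS₁d.diagonal_diag, Matrix.mul_diagonal, hS₂d hij] at h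
    exact (mul_eq_zero.mp h).resolve_right (hS₁pos j).ne'
  have hu : IsUnit (S₁ * Aᵀ) :=
    ((Matrix.isUnit_iff_isUnit_det _).mpr u1).mul ((Matrix.isUnit_transpose A).mpr hA)
  have hc : A * D = D * A := by
    apply hu.mul_right_cancel
    calc A * D * (S₁ * Aᵀ) = A * (D * S₁) * Aᵀ := by simp only [Matrix.mul_assoc]
      _ = D * (A * S₁ * Aᵀ) := by rw [hS, h₂, h₁, hT]
      _ = D * A * (S₁ * Aᵀ) := by simp only [Matrix.mul_assoc]
  intro i j hij
  have h := congrFun (congrFun hc i) j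
  have hne := hdist i j hij
  rw [← hDd.diagonal_diag, Matrix.mul_diagonal, Matrix.diagonal_mul] at h
  simp only [Matrix.diag_apply] at h
  have h3 : (D i i - D j j) * A i j = 0 := by linarith
  exact (mul_eq_zero.mp h3).resolve_left (sub_ne_zero.mpr hne)
end

section
/- Let Z₁ and ε be independent real random variables each with the standard Gaussian distribution N(0,1), and let f : ℝ → ℝ be twice continuously differentiable with f' and f'' bounded. Define H₁ := −1 − f'(Z₁)² + f''(Z₁)·ε. Then Var(H₁) = Var(f'(Z₁)²) + E[f''(Z₁)²]. Moreover, if f'' is not identically zero (i.e. f is not affine), then Var(H₁) > 0, while the leaf diagonal Hessian entry H₂ := −1 is constant and has Var(H₂) = 0. -/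
open MeasureTheory ProbabilityTheory

/-- Variance asymmetry between the root and leaf diagonal Hessian entries of the
bivariate Gaussian ANM. With `Z₁, ε` independent standard Gaussians and
`H₁ = −1 − f'(Z₁)² + f''(Z₁)·ε`, we have `Var(H₁) = Var(f'(Z₁)²) + E[f''(Z₁)²]`;
if `f''` is not identically zero then `Var(H₁) > 0`, while the constant leaf entry
`H₂ = −1` has variance `0`. -/
theorem anm_hessian_variance_asymmetry
    {Ω : Type*} [MeasurableSpace Ω] (μ : Measure Ω) [IsProbabilityMeasure μ]
    (Z₁ ε : Ω → ℝ) (hZ₁ : Measurable Z₁) (hε : Measurable ε)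
    (hindep : IndepFun Z₁ ε μ)
    (hZ₁law : μ.map Z₁ = gaussianReal 0 1) (hεlaw : μ.map ε = gaussianReal 0 1)
    (f : ℝ → ℝ) (hf : ContDiff ℝ 2 f)
    (C : ℝ) (hf'bdd : ∀ x, |deriv f x| ≤ C) (hf''bdd : ∀ x, |deriv (deriv f) x| ≤ C) :
    variance (fun ω => -1 - (deriv f (Z₁ ω)) ^ 2 + deriv (deriv f) (Z₁ ω) * ε ω) μ
        = variance (fun ω => (deriv f (Z₁ ω)) ^ 2) μ
          + ∫ ω, (deriv (deriv f) (Z₁ ω)) ^ 2 ∂μ ∧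
    (deriv (deriv f) ≠ 0 →
      0 < variance (fun ω => -1 - (deriv f (Z₁ ω)) ^ 2 + deriv (deriv f) (Z₁ ω) * ε ω) μ) ∧
    variance (fun _ : Ω => (-1 : ℝ)) μ = 0 := by
  have hc1 : Continuous (deriv f) := hf.continuous_deriv (by norm_num)
  have hc2 : Continuous (deriv (deriv f)) := by
    have h : ContDiff ℝ 1 (deriv f) := by
      have h2 : ContDiff ℝ (1 + 1) f := by
        rw [one_add_one_eq_two]; exact hf
      exact (contDiff_succ_iff_deriv.1 h2).2.2
    exact h.continuous_deriv le_rfl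
  set g := deriv f with hg
  set h := deriv g with hh
  have hgm : Measurable g := hc1.measurable
  have hhm : Measurable h := hc2.measurable
  have hεL : MemLp ε 2 μ := by
    have h1 : MemLp id 2 (μ.map ε) := by
      rw [hεlaw]; exact memLp_id_gaussianReal' 2 (by norm_num)
    exact h1.comp_of_map hε.aemeasurable
  have hε0 : ∫ ω, ε ω ∂μ = 0 := by
    have h1 := integral_map (μ := μ) hε.aemeasurable
      (f := fun x : ℝ => x) measurable_id.aestronglyMeasurable
    rw [← h1, hεlaw, integral_id_gaussianReal]
  have hε2 : ∫ ω, (ε ω) ^ 2 ∂μ = 1 := by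
    have h1 : variance ε μ = 1 := by
      rw [← variance_id_map hε.aemeasurable, hεlaw, variance_id_gaussianReal]; simp
    rw [variance_of_integral_eq_zero hε.aemeasurable hε0] at h1
    exact h1
  have hG : MemLp (fun ω => -1 - (g (Z₁ ω)) ^ 2) 2 μ := by
    refine MemLp.of_bound (by fun_prop) (1 + C ^ 2) (Filter.Eventually.of_forall fun ω => ?_)
    have := sq_le_sq' (abs_le.1 (hf'bdd (Z₁ ω))).1 (abs_le.1 (hf'bdd (Z₁ ω))).2
    rw [Real.norm_eq_abs, abs_le]
    constructor <;> nlinarith [sq_nonneg (g (Z₁ ω))]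
  have hB : MemLp (fun ω => h (Z₁ ω) * ε ω) 2 μ := by
    refine MemLp.of_le_mul (c := C) hεL (by fun_prop) (Filter.Eventually.of_forall fun ω => ?_)
    rw [norm_mul]
    exact mul_le_mul_of_nonneg_right (hf''bdd _) (norm_nonneg _)
  have hB0 : ∫ ω, h (Z₁ ω) * ε ω ∂μ = 0 := by
    rw [hindep.integral_fun_comp_mul_comp (f := h) (g := fun x => x) hZ₁.aemeasurable
      hε.aemeasurable hhm.aestronglyMeasurable measurable_id.aestronglyMeasurable, hε0, mul_zero]
  have hAB : ∫ ω, (-1 - (g (Z₁ ω)) ^ 2) * (h (Z₁ ω) * ε ω) ∂μ = 0 := by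
    have := hindep.integral_fun_comp_mul_comp (f := fun z => (-1 - (g z) ^ 2) * h z)
      (g := fun x => x) hZ₁.aemeasurable
      hε.aemeasurable (by fun_prop) measurable_id.aestronglyMeasurable
    rw [hε0, mul_zero] at this
    simpa only [mul_assoc] using this
  have hBB : ∫ ω, (h (Z₁ ω) * ε ω) ^ 2 ∂μ = ∫ ω, (h (Z₁ ω)) ^ 2 ∂μ := by
    have := hindep.integral_fun_comp_mul_comp (f := fun z => (h z) ^ 2)
      (g := fun x => x ^ 2) hZ₁.aemeasurable
      hε.aemeasurable (by fun_prop) (by fun_prop)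
    rw [hε2, mul_one] at this
    simpa only [mul_pow] using this
  have hcov : covariance (fun ω => -1 - (g (Z₁ ω)) ^ 2) (fun ω => h (Z₁ ω) * ε ω) μ = 0 := by
    rw [covariance_eq_sub hG hB, hB0, mul_zero, sub_zero]
    exact hAB
  have key : variance (fun ω => -1 - (g (Z₁ ω)) ^ 2 + h (Z₁ ω) * ε ω) μ
        = variance (fun ω => (g (Z₁ ω)) ^ 2) μ + ∫ ω, (h (Z₁ ω)) ^ 2 ∂μ := by
    rw [variance_fun_add hG hB, hcov, variance_of_integral_eq_zero hB.aemeasurable hB0,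
      variance_const_sub (by fun_prop), mul_zero, add_zero]
    congr 1
  refine ⟨key, fun hne => ?_, ?_⟩
  · rw [key]
    refine add_pos_of_nonneg_of_pos (variance_nonneg _ _) ?_
    have h1 := integral_map (μ := μ) hZ₁.aemeasurable
      (f := fun x : ℝ => (h x) ^ 2) (by fun_prop)
    rw [← h1, hZ₁law]
    haveI : (gaussianReal 0 1).IsOpenPosMeasure :=
      (gaussianReal_absolutelyContinuous' 0 one_ne_zero).isOpenPosMeasure
    have hint : Integrable (fun x => (h x) ^ 2) (gaussianReal 0 1) := by
      refine Integrable.of_bound (by fun_prop) (C ^ 2) (Filter.Eventually.of_forall fun x => ?_)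
      rw [norm_pow]
      exact pow_le_pow_left₀ (norm_nonneg _) (hf''bdd x) 2
    rw [integral_pos_iff_support_of_nonneg (fun x => sq_nonneg _) hint]
    obtain ⟨x, hx⟩ := Function.ne_iff.1 hne
    refine IsOpen.measure_pos _ ((hc2.pow 2).isOpen_support) ⟨x, ?_⟩
    simpa using hx
  · rw [variance_eq_integral aemeasurable_const]
    simp
end
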